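/- Let q ∈ (0,1), R > 0, ε > 0, and let a : ℕ → ℝ satisfy a i ≥ 0 for all i, with i ↦ (a i)^q summable and ∑'_{i} (a i)^q ≤ R. Then taking λ = (ε²/R)^{1/(1−q)} > 0, one has λ · ∑'_{i} a i/(λ + a i) ≤ ε² and ∑'_{i} a i/(λ + a i) ≤ R^{1/(1−q)} · ε^{−2q/(1−q)}. -/

import Mathlib

/-!
Since `a ^ (1 - q) * L ^ q ≤ L + a`, each term satisfies `a / (L + a) ≤ (a / L) ^ q`, so that
`K(L) = ∑' i, a i / (L + a i) ≤ R * L ^ (-q)`. The choice `L = (ε ^ 2 / R) ^ (1 / (1 - q))` is the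
solution of `R * L ^ (1 - q) = ε ^ 2`. Multiplying the bound on `K(L)` by `L` therefore gives the
first inequality, and evaluating `R * L ^ (-q)` gives the second.
-/

/-- The interpolation bound comparing one term of the effective rank with a `q`-th power. -/
theorem div_add_le_rpow {q L x : ℝ} (hq0 : 0 < q) (hq1 : q < 1) (hL : 0 < L) (hx : 0 ≤ x) :
    x / (L + x) ≤ x ^ q * L ^ (-q) := by
  have hs : 0 < L + x := by linarith
  have hxsplit : x = x ^ q * x ^ (1 - q) := by
    rw [← Real.rpow_add_of_nonneg hx hq0.le (by linarith)]
    simp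
  have h1 : x ^ (1 - q) * L ^ q ≤ L + x := by
    calc x ^ (1 - q) * L ^ q ≤ (L + x) ^ (1 - q) * (L + x) ^ q := by
          apply mul_le_mul
          · exact Real.rpow_le_rpow hx (by linarith) (by linarith)
          · exact Real.rpow_le_rpow hL.le (by linarith) hq0.le
          · positivity
          · positivity
      _ = L + x := by
          rw [← Real.rpow_add hs]
          simp
  have hLq : 0 < L ^ q := by positivity
  rw [Real.rpow_neg hL.le, ← div_eq_mul_inv, div_le_div_iff₀ hs hLq]
  calc x * L ^ q = x ^ q * (x ^ (1 - q) * L ^ q) := by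
        rw [← mul_assoc, ← hxsplit]
    _ ≤ x ^ q * (L + x) := mul_le_mul_of_nonneg_left h1 (by positivity)

/-- polynomial-decay case of Proposition 3.1. -/
theorem stmt_4 (q : ℝ) (hq : q ∈ Set.Ioo (0 : ℝ) 1) (R : ℝ) (hR : 0 < R)
    (ε : ℝ) (hε : 0 < ε) (a : ℕ → ℝ) (ha : ∀ i, 0 ≤ a i)
    (hsum : Summable (fun i => a i ^ q)) (hle : ∑' i, a i ^ q ≤ R) :
    0 < (ε ^ 2 / R) ^ (1 / (1 - q)) ∧
    (ε ^ 2 / R) ^ (1 / (1 - q)) *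
        ∑' i, a i / ((ε ^ 2 / R) ^ (1 / (1 - q)) + a i) ≤ ε ^ 2 ∧
    (∑' i, a i / ((ε ^ 2 / R) ^ (1 / (1 - q)) + a i)) ≤
        R ^ (1 / (1 - q)) * ε ^ (-(2 * q) / (1 - q)) := by
  obtain ⟨hq0, hq1⟩ := hq
  have h1q : 1 - q ≠ 0 := by linarith
  have hb : 0 < ε ^ 2 / R := by positivity
  have hL : 0 < (ε ^ 2 / R) ^ (1 / (1 - q)) := by positivity
  have hLpow : ((ε ^ 2 / R) ^ (1 / (1 - q))) ^ (1 - q) = ε ^ 2 / R := by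
    rw [← Real.rpow_mul hb.le, one_div_mul_cancel h1q, Real.rpow_one]
  have hLval : R * ((ε ^ 2 / R) ^ (1 / (1 - q))) ^ (-q)
      = R ^ (1 / (1 - q)) * ε ^ (-(2 * q) / (1 - q)) := by
    have hε2 : ε ^ 2 = ε ^ (2 : ℝ) := by norm_cast
    rw [← Real.rpow_mul hb.le, Real.div_rpow (by positivity) hR.le, hε2,
      ← Real.rpow_mul hε.le, div_eq_mul_inv, ← Real.rpow_neg hR.le]
    have hRexp : R ^ (1 / (1 - q)) = R * R ^ (-(1 / (1 - q) * -q)) := by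
      nth_rewrite 2 [← Real.rpow_one R]
      rw [← Real.rpow_add hR]
      congr 1
      field_simp
      ring
    have hεexp : 2 * (1 / (1 - q) * -q) = -(2 * q) / (1 - q) := by
      field_simp
    rw [hRexp, hεexp]
    ring
  generalize (ε ^ 2 / R) ^ (1 / (1 - q)) = L at hL hLpow hLval ⊢
  have hterm : ∀ i, a i / (L + a i) ≤ a i ^ q * L ^ (-q) := fun i =>
    div_add_le_rpow hq0 hq1 hL (ha i)
  have hS : Summable (fun i => a i ^ q * L ^ (-q)) := hsum.mul_right _
  have hS' : Summable (fun i => a i / (L + a i)) :=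
    Summable.of_nonneg_of_le (fun i => div_nonneg (ha i) (by linarith [ha i])) hterm hS
  have hK : ∑' i, a i / (L + a i) ≤ R * L ^ (-q) := by
    calc ∑' i, a i / (L + a i) ≤ ∑' i, a i ^ q * L ^ (-q) := hS'.tsum_le_tsum hterm hS
      _ = (∑' i, a i ^ q) * L ^ (-q) := tsum_mul_right
      _ ≤ R * L ^ (-q) := mul_le_mul_of_nonneg_right hle (by positivity)
  refine ⟨hL, ?_, hK.trans hLval.le⟩
  calc L * ∑' i, a i / (L + a i) ≤ L * (R * L ^ (-q)) := mul_le_mul_of_nonneg_left hK hL.le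
    _ = R * L ^ (1 - q) := by
        rw [sub_eq_add_neg, Real.rpow_add hL, Real.rpow_one]
        ring
    _ = ε ^ 2 := by
        rw [hLpow]
        field_simp
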